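/- arXiv:1908.06131 — 2 statements merged into one kernel-verified Lean document; each statement's English description precedes it below -/
import Mathlib

section
/- Let Q and R be probability measures on a measurable space X, let β ∈ [0,1], let T be a positive integer, and let P = (1−β)^T·Q + (1−(1−β)^T)·R. Then ‖P − Q‖₁ ≤ 2·min(1, T·β). -/
open MeasureTheory

/-!
Writing `c = 1 - (1-β)^T`, the signed measure `P - Q` takes the value `c (R A - Q A)` on a
measurable set `A`, which lies in `[-c, c]`. Its total mass is its value on a positive Hahn set
minus its value on the complement (`totalVariation_univ_le`), hence at most `2c`; finally `c ≤ 1`,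
and `c ≤ Tβ` by Bernoulli's inequality.
-/

/-- The total variation is attained on the two pieces of a Hahn decomposition, so a uniform bound
on the values of a signed measure bounds its total variation up to a factor two. -/
lemma totalVariation_univ_le {X : Type*} [MeasurableSpace X] (s : SignedMeasure X) (c : ℝ)
    (h : ∀ A, MeasurableSet A → |s A| ≤ c) :
    (s.totalVariation Set.univ).toReal ≤ 2 * c := by
  obtain ⟨i, hi, hpos, hneg, hp, hn⟩ := s.toJordanDecomposition_spec
  rw [SignedMeasure.totalVariation, Measure.add_apply,
    ENNReal.toReal_add (measure_ne_top _ _) (measure_ne_top _ _), hp, hn]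
  have e1 := SignedMeasure.toMeasureOfZeroLE_real_apply s hpos hi MeasurableSet.univ
  have e2 := SignedMeasure.toMeasureOfLEZero_real_apply s hneg hi.compl MeasurableSet.univ
  rw [Measure.real, Set.inter_univ] at e1 e2
  rw [e1, e2]
  linarith [le_of_abs_le (h i hi), neg_le_of_abs_le (h iᶜ hi.compl)]

/-- If `Q` and `R` are probability measures, `β ∈ [0,1]`, `T` is a positive integer, and
`P = (1-β)^T • Q + (1 - (1-β)^T) • R`, then `‖P - Q‖₁ ≤ 2 * min 1 (T * β)`, where `‖·‖₁`
denotes the total variation of the corresponding signed measure evaluated on the whole space. -/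
theorem tv_mixed_policy_le_two_min
    {X : Type*} [MeasurableSpace X]
    (Q R : Measure X) [IsProbabilityMeasure Q] [IsProbabilityMeasure R]
    (β : ℝ) (hβ : β ∈ Set.Icc (0 : ℝ) 1) (T : ℕ) (hT : 0 < T)
    (P : Measure X) [IsFiniteMeasure P]
    (hP : P = ENNReal.ofReal ((1 - β) ^ T) • Q
        + ENNReal.ofReal (1 - (1 - β) ^ T) • R) :
    ((P.toSignedMeasure - Q.toSignedMeasure).totalVariation Set.univ).toReal
        ≤ 2 * min 1 ((T : ℝ) * β) := by
  obtain ⟨h0, h1⟩ := hβ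
  have ha0 : 0 ≤ (1 - β) ^ T := pow_nonneg (by linarith) T
  have ha1 : (1 - β) ^ T ≤ 1 := pow_le_one₀ (by linarith) (by linarith)
  have hbern : 1 + (T : ℝ) * (-β) ≤ (1 + -β) ^ T := one_add_mul_le_pow (by linarith) T
  rw [← sub_eq_add_neg] at hbern
  refine (totalVariation_univ_le _ (1 - (1 - β) ^ T) fun A hA => ?_).trans ?_
  · have hPA : P.real A = (1 - β) ^ T * Q.real A + (1 - (1 - β) ^ T) * R.real A := by
      have hfin (r : ℝ) (μ : Measure X) [IsProbabilityMeasure μ] :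
          (ENNReal.ofReal r • μ) A ≠ ⊤ := by
        rw [Measure.smul_apply, smul_eq_mul]
        exact ENNReal.mul_ne_top ENNReal.ofReal_ne_top (measure_ne_top μ A)
      rw [hP, measureReal_add_apply (hfin _ Q) (hfin _ R), measureReal_ennreal_smul_apply,
        measureReal_ennreal_smul_apply, ENNReal.toReal_ofReal ha0,
        ENNReal.toReal_ofReal (by linarith)]
    rw [sub_apply, Measure.toSignedMeasure_apply_measurable hA,
      Measure.toSignedMeasure_apply_measurable hA, hPA]
    have hQ0 : 0 ≤ Q.real A := measureReal_nonneg
    have hR0 : 0 ≤ R.real A := measureReal_nonneg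
    have hQ1 : Q.real A ≤ 1 := measureReal_le_one
    have hR1 : R.real A ≤ 1 := measureReal_le_one
    rw [abs_le]
    constructor <;> nlinarith
  · have : 1 - (1 - β) ^ T ≤ min 1 ((T : ℝ) * β) := le_min (by linarith) (by linarith)
    linarith
end

section
/- Let Q and R be probability measures on a measurable space X, let β ∈ [0,1], let T be a positive integer, let P = (1−β)^T·Q + (1−(1−β)^T)·R, and let f : X → ℝ be a measurable function with 0 ≤ f(x) ≤ l_max for all x ∈ X. Then E_{x∼Q}[f(x)] ≤ E_{x∼P}[f(x)] + l_max·min(1, T·β). -/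
/-!
Write `a = (1 - β) ^ T`. Since `P = a • Q + (1 - a) • R`, linearity of the integral in the measure
gives `∫ f ∂Q - ∫ f ∂P = (1 - a) * (∫ f ∂Q - ∫ f ∂R)`, which is at most `(1 - a) * lmax` because
`0 ≤ f ≤ lmax`. Finally `1 - a ≤ 1` trivially and `1 - a ≤ T * β` by Bernoulli's inequality.
-/

open MeasureTheory

/-- If `Q` and `R` are probability measures, `β ∈ [0,1]`, `T` is a positive integer,
`P = (1-β)^T • Q + (1 - (1-β)^T) • R`, and `f` is a measurable function with
`0 ≤ f x ≤ l_max` for all `x`, then `E_{Q}[f] ≤ E_{P}[f] + l_max * min 1 (T * β)`. -/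
theorem expectation_le_mixed_expectation_add
    {X : Type*} [MeasurableSpace X]
    (Q R : Measure X) [IsProbabilityMeasure Q] [IsProbabilityMeasure R]
    (β : ℝ) (hβ : β ∈ Set.Icc (0 : ℝ) 1) (T : ℕ) (hT : 0 < T)
    (P : Measure X) [IsFiniteMeasure P]
    (hP : P = ENNReal.ofReal ((1 - β) ^ T) • Q
        + ENNReal.ofReal (1 - (1 - β) ^ T) • R)
    (f : X → ℝ) (hf : Measurable f) (lmax : ℝ)
    (hfb : ∀ x, 0 ≤ f x ∧ f x ≤ lmax) :
    ∫ x, f x ∂Q ≤ (∫ x, f x ∂P) + lmax * min 1 ((T : ℝ) * β) := by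
  obtain ⟨hβ0, hβ1⟩ := hβ
  have hint : ∀ (μ : Measure X) [IsFiniteMeasure μ], Integrable f μ := fun μ _ =>
    Integrable.of_bound hf.aestronglyMeasurable lmax
      (Filter.Eventually.of_forall fun x => by
        rw [Real.norm_eq_abs, abs_of_nonneg (hfb x).1]; exact (hfb x).2)
  have ha0 : 0 ≤ (1 - β) ^ T := pow_nonneg (by linarith) T
  have ha1 : (1 - β) ^ T ≤ 1 := pow_le_one₀ (by linarith) (by linarith)
  -- Bernoulli's inequality bounds the weight of `R` by `T * β`.
  have hbern : 1 - (1 - β) ^ T ≤ T * β := by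
    have h := one_add_mul_le_pow (a := -β) (by linarith) T
    rw [← sub_eq_add_neg 1 β] at h
    linarith
  have hmin : 1 - (1 - β) ^ T ≤ min 1 ((T : ℝ) * β) := le_min (by linarith) hbern
  have hR0 : 0 ≤ ∫ x, f x ∂(R) := integral_nonneg fun x => (hfb x).1
  have hQ0 : 0 ≤ ∫ x, f x ∂Q := integral_nonneg fun x => (hfb x).1
  have hQ1 : ∫ x, f x ∂Q ≤ lmax := by
    simpa using integral_mono (hint Q) (integrable_const lmax) fun x => (hfb x).2
  have hPint : ∫ x, f x ∂P
      = (1 - β) ^ T * ∫ x, f x ∂Q + (1 - (1 - β) ^ T) * ∫ x, f x ∂(R) := by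
    rw [hP, integral_add_measure ((hint Q).smul_measure ENNReal.ofReal_ne_top)
      ((hint R).smul_measure ENNReal.ofReal_ne_top), integral_smul_measure,
      integral_smul_measure, ENNReal.toReal_ofReal ha0,
      ENNReal.toReal_ofReal (by linarith), smul_eq_mul, smul_eq_mul]
  rw [hPint]
  have h1 : (1 - (1 - β) ^ T) * ∫ x, f x ∂Q ≤ lmax * min 1 ((T : ℝ) * β) := by
    rw [mul_comm]
    exact mul_le_mul hQ1 hmin (by linarith) (hQ0.trans hQ1)
  have h2 : 0 ≤ (1 - (1 - β) ^ T) * ∫ x, f x ∂(R) := mul_nonneg (by linarith) hR0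
  linarith
end
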